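/- For all real ν, ν' with ν ≠ ν', ν ≠ −ν', and every ξ > 0: ∫_ξ^∞ K_{iν}(x) K_{iν'}(x)/x dx = − ξ · ( K_{iν}(ξ) · K_{iν'}'(ξ) − K_{iν'}(ξ) · K_{iν}'(ξ) ) / (ν² − ν'²), where ' denotes differentiation with respect to the argument. -/

import Mathlib

open Real MeasureTheory

/-- The Macdonald function of imaginary order: `K_{iν}(x) = ∫_0^∞ e^{-x cosh t} cos(ν t) dt`. -/
noncomputable def Kim (ν x : ℝ) : ℝ :=
  ∫ t in Set.Ioi (0 : ℝ), Real.exp (-x * Real.cosh t) * Real.cos (ν * t)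

/-!
Differentiating under the integral sign and integrating by parts in `t` shows that `K_{iν}` solves
the modified Bessel equation `(x u')' = (x - ν² / x) u`. By Lagrange's identity, the derivative of
`x (K_{iν} K_{iν'}' - K_{iν'} K_{iν}')` is therefore `(ν² - ν'²) K_{iν} K_{iν'} / x`. Since
`K_{iν}` and its derivative are `O(e^{-x})`, integrating from `ξ` to `∞` leaves only the boundary
term at `ξ`.
-/

open Asymptotics Filter Set Topology

theorem hasDerivAt_mul_wronskian {𝕜 : Type*} [NontriviallyNormedField 𝕜]
    {p u v u' v' : 𝕜 → 𝕜} {α β x : 𝕜}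
    (hu : HasDerivAt u (u' x) x) (hv : HasDerivAt v (v' x) x)
    (hpu : HasDerivAt (fun y ↦ p y * u' y) (α * u x) x)
    (hpv : HasDerivAt (fun y ↦ p y * v' y) (β * v x) x) :
    HasDerivAt (fun y ↦ p y * (u y * v' y - v y * u' y)) ((β - α) * (u x * v x)) x := by
  have hsplit : (fun y ↦ p y * (u y * v' y - v y * u' y)) =
      fun y ↦ u y * (p y * v' y) - v y * (p y * u' y) := by
    funext y
    ring
  rw [hsplit]
  exact ((hu.mul hpv).sub (hv.mul hpu)).congr_deriv (by ring)

theorem abs_le_cosh (t : ℝ) : |t| ≤ cosh t := by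
  rw [← cosh_abs t]
  exact (self_le_sinh_iff.2 (abs_nonneg t)).trans (sinh_lt_cosh |t|).le

theorem abs_sinh_le_cosh (t : ℝ) : |sinh t| ≤ cosh t := by
  rw [abs_sinh, ← cosh_abs t]
  exact (sinh_lt_cosh |t|).le

theorem tendsto_cosh_atTop : Tendsto cosh atTop atTop :=
  tendsto_atTop_mono (fun t ↦ (le_abs_self t).trans (abs_le_cosh t)) tendsto_id

theorem cosh_pow_mul_exp_neg_mul_cosh_isBigO {x : ℝ} (hx : 0 < x) (n : ℕ) :
    (fun t ↦ cosh t ^ n * exp (-x * cosh t)) =O[atTop] fun t ↦ exp (-(x / 2) * t) := by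
  have hpow : (fun t ↦ cosh t ^ n) =O[atTop] fun t ↦ exp (x / 2 * cosh t) :=
    ((isLittleO_pow_exp_pos_mul_atTop n (half_pos hx)).comp_tendsto tendsto_cosh_atTop).isBigO
  calc (fun t ↦ cosh t ^ n * exp (-x * cosh t))
      =O[atTop] fun t ↦ exp (x / 2 * cosh t) * exp (-x * cosh t) :=
        hpow.mul (isBigO_refl _ _)
    _ =O[atTop] fun t ↦ exp (-(x / 2) * t) := isBigO_of_le _ fun t ↦ by
        rw [← Real.exp_add, norm_of_nonneg (exp_pos _).le, norm_of_nonneg (exp_pos _).le,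
          exp_le_exp]
        nlinarith [(le_abs_self t).trans (abs_le_cosh t)]

theorem integrableOn_cosh_pow_mul_exp_neg_mul_cosh {x : ℝ} (hx : 0 < x) (n : ℕ) (a : ℝ) :
    IntegrableOn (fun t ↦ cosh t ^ n * exp (-x * cosh t)) (Ioi a) :=
  integrable_of_isBigO_exp_neg (half_pos hx) (Continuous.continuousOn (by fun_prop))
    (cosh_pow_mul_exp_neg_mul_cosh_isBigO hx n)

theorem tendsto_cosh_pow_mul_exp_neg_mul_cosh {x : ℝ} (hx : 0 < x) (n : ℕ) :
    Tendsto (fun t ↦ cosh t ^ n * exp (-x * cosh t)) atTop (𝓝 0) :=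
  (cosh_pow_mul_exp_neg_mul_cosh_isBigO hx n).trans_tendsto <|
    tendsto_exp_atBot.comp (tendsto_id.const_mul_atTop_of_neg (by linarith))

/-- The transform `∫_0^∞ cosh(t)^n e^{-x cosh t} f(t) dt` of a weight `f`. Up to the sign `(-1)^n`
it is the `n`-th derivative in `x` of the transform with `n = 0`, which for `f(t) = cos(ν t)` is the
Macdonald function `K_{iν}`. -/
noncomputable def coshMoment (f : ℝ → ℝ) (n : ℕ) (x : ℝ) : ℝ :=
  ∫ t in Ioi 0, cosh t ^ n * exp (-x * cosh t) * f t

section BoundedWeight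

variable {f : ℝ → ℝ} {C x : ℝ}

theorem norm_cosh_pow_mul_exp_mul_le (hC : ∀ t, |f t| ≤ C) (n : ℕ) (x t : ℝ) :
    ‖cosh t ^ n * exp (-x * cosh t) * f t‖ ≤ cosh t ^ n * exp (-x * cosh t) * C := by
  rw [norm_mul, norm_of_nonneg (by positivity)]
  gcongr
  exact hC t

theorem integrableOn_coshMoment (hf : AEStronglyMeasurable f (volume.restrict (Ioi 0)))
    (hC : ∀ t, |f t| ≤ C) (n : ℕ) (hx : 0 < x) :
    IntegrableOn (fun t ↦ cosh t ^ n * exp (-x * cosh t) * f t) (Ioi 0) :=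
  (integrableOn_cosh_pow_mul_exp_neg_mul_cosh hx n 0).mul_bdd hf (ae_of_all _ hC)

theorem hasDerivAt_coshMoment (hf : AEStronglyMeasurable f (volume.restrict (Ioi 0)))
    (hC : ∀ t, |f t| ≤ C) (n : ℕ) (hx : 0 < x) :
    HasDerivAt (coshMoment f n) (-coshMoment f (n + 1) x) x := by
  have hmeas (m : ℕ) (y : ℝ) : AEStronglyMeasurable
      (fun t ↦ cosh t ^ m * exp (-y * cosh t) * f t) (volume.restrict (Ioi 0)) :=
    (Continuous.aestronglyMeasurable (by fun_prop)).mul hf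
  have hderiv (t y : ℝ) : HasDerivAt (fun y ↦ cosh t ^ n * exp (-y * cosh t) * f t)
      (-(cosh t ^ (n + 1) * exp (-y * cosh t) * f t)) y := by
    have hexp := ((hasDerivAt_neg y).mul_const (cosh t)).exp
    exact ((hexp.const_mul (cosh t ^ n)).mul_const (f t)).congr_deriv (by ring)
  have hbound (t y : ℝ) (hy : y ∈ Ioi (x / 2)) :
      ‖-(cosh t ^ (n + 1) * exp (-y * cosh t) * f t)‖
        ≤ cosh t ^ (n + 1) * exp (-(x / 2) * cosh t) * C := by
    have hC₀ : 0 ≤ C := (abs_nonneg _).trans (hC t)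
    rw [norm_neg]
    refine (norm_cosh_pow_mul_exp_mul_le hC (n + 1) y t).trans ?_
    gcongr
    exact le_of_lt hy
  have key := (hasDerivAt_integral_of_dominated_loc_of_deriv_le
    (Ioi_mem_nhds (half_lt_self hx)) (Eventually.of_forall (hmeas n))
    (integrableOn_coshMoment hf hC n hx) (hmeas (n + 1) x).neg
    (ae_of_all _ hbound)
    ((integrableOn_cosh_pow_mul_exp_neg_mul_cosh (half_pos hx) (n + 1) 0).mul_const C)
    (ae_of_all _ fun t y _ ↦ hderiv t y)).2
  rwa [integral_neg] at key

theorem coshMoment_isBigO_exp_neg (hC : ∀ t, |f t| ≤ C) (n : ℕ) :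
    coshMoment f n =O[atTop] fun x ↦ exp (-x) := by
  have hkernel (x t : ℝ) (hx : 1 ≤ x) :
      exp (-x * cosh t) ≤ exp (-1 * cosh t) * exp (1 - x) := by
    rw [← Real.exp_add, exp_le_exp]
    nlinarith [one_le_cosh t]
  have hbound (x t : ℝ) (hx : 1 ≤ x) : ‖cosh t ^ n * exp (-x * cosh t) * f t‖ ≤
      cosh t ^ n * exp (-1 * cosh t) * (exp (1 - x) * C) := by
    have hC₀ : 0 ≤ C := (abs_nonneg _).trans (hC t)
    calc ‖cosh t ^ n * exp (-x * cosh t) * f t‖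
        ≤ cosh t ^ n * exp (-x * cosh t) * C := norm_cosh_pow_mul_exp_mul_le hC n x t
      _ ≤ cosh t ^ n * (exp (-1 * cosh t) * exp (1 - x)) * C := by
        gcongr
        exact hkernel x t hx
      _ = cosh t ^ n * exp (-1 * cosh t) * (exp (1 - x) * C) := by ring
  refine .of_bound ((∫ t in Ioi 0, cosh t ^ n * exp (-1 * cosh t)) * (exp 1 * C)) ?_
  filter_upwards [eventually_ge_atTop 1] with x hx
  calc ‖coshMoment f n x‖
      ≤ ∫ t in Ioi 0, cosh t ^ n * exp (-1 * cosh t) * (exp (1 - x) * C) :=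
        norm_integral_le_of_norm_le
          ((integrableOn_cosh_pow_mul_exp_neg_mul_cosh one_pos n 0).mul_const _)
          (ae_of_all _ fun t ↦ hbound x t hx)
    _ = (∫ t in Ioi 0, cosh t ^ n * exp (-1 * cosh t)) * (exp 1 * C) * ‖exp (-x)‖ := by
        rw [integral_mul_const, norm_of_nonneg (exp_pos _).le, sub_eq_add_neg, Real.exp_add]
        ring

end BoundedWeight

section CosineWeight

variable {x : ℝ}

-- The factors `cosh t ^ 0` and `cosh t ^ 1` make each term an integrand of `coshMoment`.
theorem hasDerivAt_exp_neg_mul_cosh_mul_trig (ν x t : ℝ) :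
    HasDerivAt
      (fun t ↦ exp (-x * cosh t) * (ν * sin (ν * t) - x * sinh t * cos (ν * t)))
      (x ^ 2 * (cosh t ^ 2 * exp (-x * cosh t) * cos (ν * t))
        - x * (cosh t ^ 1 * exp (-x * cosh t) * cos (ν * t))
        - (x ^ 2 - ν ^ 2) * (cosh t ^ 0 * exp (-x * cosh t) * cos (ν * t))) t := by
  have hlin : HasDerivAt (fun t ↦ ν * t) ν t := hasDerivAt_const_mul ν
  have hexp := ((Real.hasDerivAt_cosh t).const_mul (-x)).exp
  have htrig := (hlin.sin.const_mul ν).sub (((Real.hasDerivAt_sinh t).const_mul x).mul hlin.cos)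
  refine (hexp.mul htrig).congr_deriv ?_
  simp only [Pi.mul_apply, Pi.sub_apply]
  linear_combination -x ^ 2 * exp (-x * cosh t) * cos (ν * t) * Real.cosh_sq t

theorem tendsto_exp_neg_mul_cosh_mul_trig (ν : ℝ) (hx : 0 < x) :
    Tendsto (fun t ↦ exp (-x * cosh t) * (ν * sin (ν * t) - x * sinh t * cos (ν * t)))
      atTop (𝓝 0) := by
  have hlim : Tendsto (fun t ↦ |ν| * (cosh t ^ 0 * exp (-x * cosh t))
      + x * (cosh t ^ 1 * exp (-x * cosh t))) atTop (𝓝 0) := by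
    simpa only [mul_zero, add_zero] using
      ((tendsto_cosh_pow_mul_exp_neg_mul_cosh hx 0).const_mul |ν|).add
        ((tendsto_cosh_pow_mul_exp_neg_mul_cosh hx 1).const_mul x)
  refine squeeze_zero_norm (fun t ↦ ?_) hlim
  have hsin : |ν * sin (ν * t)| ≤ |ν| := by
    rw [abs_mul]
    exact mul_le_of_le_one_right (abs_nonneg ν) (abs_sin_le_one _)
  have hcos : |x * sinh t * cos (ν * t)| ≤ x * cosh t := by
    rw [abs_mul, abs_mul, abs_of_pos hx]
    refine (mul_le_of_le_one_right (by positivity) (abs_cos_le_one _)).trans ?_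
    gcongr
    exact abs_sinh_le_cosh t
  calc ‖exp (-x * cosh t) * (ν * sin (ν * t) - x * sinh t * cos (ν * t))‖
      = exp (-x * cosh t) * |ν * sin (ν * t) - x * sinh t * cos (ν * t)| := by
        rw [norm_mul, norm_of_nonneg (exp_pos _).le, norm_eq_abs]
    _ ≤ exp (-x * cosh t) * (|ν| + x * cosh t) := by
        gcongr
        exact (abs_sub _ _).trans (add_le_add hsin hcos)
    _ = |ν| * (cosh t ^ 0 * exp (-x * cosh t)) + x * (cosh t ^ 1 * exp (-x * cosh t)) := by ring

theorem integrableOn_coshMoment_cos (ν : ℝ) (n : ℕ) (hx : 0 < x) :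
    IntegrableOn (fun t ↦ cosh t ^ n * exp (-x * cosh t) * cos (ν * t)) (Ioi 0) :=
  integrableOn_coshMoment (Continuous.aestronglyMeasurable (by fun_prop))
    (fun _ ↦ abs_cos_le_one _) n hx

theorem hasDerivAt_coshMoment_cos (ν : ℝ) (n : ℕ) (hx : 0 < x) :
    HasDerivAt (coshMoment (fun t ↦ cos (ν * t)) n)
      (-coshMoment (fun t ↦ cos (ν * t)) (n + 1) x) x :=
  hasDerivAt_coshMoment (Continuous.aestronglyMeasurable (by fun_prop))
    (fun _ ↦ abs_cos_le_one _) n hx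

theorem coshMoment_cos_recurrence (ν : ℝ) (hx : 0 < x) :
    x ^ 2 * coshMoment (fun t ↦ cos (ν * t)) 2 x - x * coshMoment (fun t ↦ cos (ν * t)) 1 x
      - (x ^ 2 - ν ^ 2) * coshMoment (fun t ↦ cos (ν * t)) 0 x = 0 := by
  have hint (n : ℕ) (c : ℝ) := (integrableOn_coshMoment_cos ν n hx).const_mul c
  have hFTC := integral_Ioi_of_hasDerivAt_of_tendsto' (a := 0)
    (fun t _ ↦ hasDerivAt_exp_neg_mul_cosh_mul_trig ν x t)
    (((hint 2 (x ^ 2)).sub (hint 1 x)).sub (hint 0 (x ^ 2 - ν ^ 2)))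
    (tendsto_exp_neg_mul_cosh_mul_trig ν hx)
  rw [integral_sub (by exact (hint 2 _).sub (hint 1 _)) (hint 0 _),
    integral_sub (hint 2 _) (hint 1 _)] at hFTC
  simpa only [integral_const_mul, coshMoment, mul_zero, sin_zero, sinh_zero, zero_mul, sub_zero]
    using hFTC

end CosineWeight

section Macdonald

variable {x : ℝ}

theorem Kim_eq_coshMoment (ν : ℝ) : Kim ν = coshMoment (fun t ↦ cos (ν * t)) 0 := by
  funext x
  simp only [Kim, coshMoment, pow_zero, one_mul]

theorem hasDerivAt_Kim (ν : ℝ) (hx : 0 < x) :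
    HasDerivAt (Kim ν) (-coshMoment (fun t ↦ cos (ν * t)) 1 x) x := by
  rw [Kim_eq_coshMoment]
  exact hasDerivAt_coshMoment_cos ν 0 hx

theorem differentiableAt_Kim (ν : ℝ) (hx : 0 < x) : DifferentiableAt ℝ (Kim ν) x :=
  (hasDerivAt_Kim ν hx).differentiableAt

theorem hasDerivAt_mul_deriv_Kim (ν : ℝ) (hx : 0 < x) :
    HasDerivAt (fun y ↦ y * deriv (Kim ν) y) ((x - ν ^ 2 / x) * Kim ν x) x := by
  have hderiv : (fun y ↦ y * deriv (Kim ν) y) =ᶠ[𝓝 x]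
      fun y ↦ y * -coshMoment (fun t ↦ cos (ν * t)) 1 y := by
    filter_upwards [Ioi_mem_nhds hx] with y hy
    rw [(hasDerivAt_Kim ν hy).deriv]
  refine (((hasDerivAt_id x).mul (hasDerivAt_coshMoment_cos ν 1 hx).neg).congr_deriv
    ?_).congr_of_eventuallyEq hderiv
  rw [Kim_eq_coshMoment]
  simp only [Pi.neg_apply, id]
  field_simp
  linear_combination coshMoment_cos_recurrence ν hx

theorem Kim_isBigO_exp_neg (ν : ℝ) : Kim ν =O[atTop] fun x ↦ exp (-x) := by
  rw [Kim_eq_coshMoment]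
  exact coshMoment_isBigO_exp_neg (fun _ ↦ abs_cos_le_one _) 0

theorem deriv_Kim_isBigO_exp_neg (ν : ℝ) : deriv (Kim ν) =O[atTop] fun x ↦ exp (-x) := by
  refine (coshMoment_isBigO_exp_neg (f := fun t ↦ cos (ν * t))
    (fun _ ↦ abs_cos_le_one _) 1).neg_left.congr' ?_ .rfl
  filter_upwards [eventually_gt_atTop 0] with x hx
  exact (hasDerivAt_Kim ν hx).deriv.symm

theorem integrableOn_Kim_mul_Kim_div (ν ν' : ℝ) {ξ : ℝ} (hξ : 0 < ξ) :
    IntegrableOn (fun x ↦ Kim ν x * Kim ν' x / x) (Ioi ξ) := by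
  have hcont : ContinuousOn (fun x ↦ Kim ν x * Kim ν' x / x) (Ici ξ) := fun x hx ↦ by
    have hx₀ : 0 < x := hξ.trans_le hx
    exact (((differentiableAt_Kim ν hx₀).continuousAt.mul
      (differentiableAt_Kim ν' hx₀).continuousAt).div continuousAt_id hx₀.ne').continuousWithinAt
  have hinv : (fun x : ℝ ↦ x⁻¹) =O[atTop] fun _ ↦ (1 : ℝ) := tendsto_inv_atTop_zero.isBigO_one ℝ
  refine integrable_of_isBigO_exp_neg two_pos hcont ?_
  refine (((Kim_isBigO_exp_neg ν).mul (Kim_isBigO_exp_neg ν')).mul hinv).congr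
    (fun x ↦ (div_eq_mul_inv _ _).symm) fun x ↦ ?_
  rw [mul_one, ← Real.exp_add]
  ring_nf

theorem tendsto_mul_wronskian_Kim (ν ν' : ℝ) :
    Tendsto (fun x ↦ x * (Kim ν x * deriv (Kim ν') x - Kim ν' x * deriv (Kim ν) x))
      atTop (𝓝 0) := by
  have hwronskian := ((Kim_isBigO_exp_neg ν).mul (deriv_Kim_isBigO_exp_neg ν')).sub
    ((Kim_isBigO_exp_neg ν').mul (deriv_Kim_isBigO_exp_neg ν))
  refine ((isBigO_refl (fun x : ℝ ↦ x) atTop).mul hwronskian).trans_tendsto ?_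
  simpa only [pow_one, mul_zero, mul_assoc] using
    (tendsto_pow_mul_exp_neg_atTop_nhds_zero 1).mul tendsto_exp_neg_atTop_nhds_zero

theorem hasDerivAt_mul_wronskian_Kim (ν ν' : ℝ) (hx : 0 < x) :
    HasDerivAt (fun y ↦ y * (Kim ν y * deriv (Kim ν') y - Kim ν' y * deriv (Kim ν) y))
      ((ν ^ 2 - ν' ^ 2) * (Kim ν x * Kim ν' x / x)) x :=
  (hasDerivAt_mul_wronskian (differentiableAt_Kim ν hx).hasDerivAt
    (differentiableAt_Kim ν' hx).hasDerivAt (hasDerivAt_mul_deriv_Kim ν hx)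
    (hasDerivAt_mul_deriv_Kim ν' hx)).congr_deriv (by ring)

end Macdonald

theorem macdonald_integral_boundary_formula (ν ν' ξ : ℝ) (hξ : 0 < ξ)
    (h1 : ν ≠ ν') (h2 : ν ≠ -ν') :
    ∫ x in Set.Ici ξ, Kim ν x * Kim ν' x / x =
      -ξ * (Kim ν ξ * deriv (Kim ν') ξ - Kim ν' ξ * deriv (Kim ν) ξ) /
        (ν ^ 2 - ν' ^ 2) := by
  have hν : ν ^ 2 - ν' ^ 2 ≠ 0 := by
    rw [sub_ne_zero, Ne, sq_eq_sq_iff_eq_or_eq_neg]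
    exact not_or_intro h1 h2
  have hFTC := integral_Ioi_of_hasDerivAt_of_tendsto'
    (fun x hx ↦ hasDerivAt_mul_wronskian_Kim ν ν' (hξ.trans_le hx))
    ((integrableOn_Kim_mul_Kim_div ν ν' hξ).const_mul (ν ^ 2 - ν' ^ 2))
    (tendsto_mul_wronskian_Kim ν ν')
  rw [integral_const_mul] at hFTC
  rw [integral_Ici_eq_integral_Ioi, eq_div_iff hν]
  linear_combination hFTC
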